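/- Let 1/2 < γ ≤ 1, let A : ℝ³ → ℝ³⊗ℝ³ satisfy ‖∇A‖_1 < ∞, and let X ∈ 𝒞^γ. Then there exists a time T₀ > 0, depending only on ‖X‖_γ^*, ‖∇A‖_1 and γ, such that for every 0 < T < T₀ there is a constant B_T with the property that the set Q_T := { Y ∈ C([0,T], 𝒞^γ) : Y(0) = X, ‖Y‖_{𝐗_T} ≤ B_T } is invariant under the map F defined by F(Y)(t)_ξ := X_ξ + ∫_0^t V^{Y(s)}(Y(s)_ξ) ds, i.e. F maps Q_T into Q_T. -/

import Mathlib

/-!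
Let `K` be the constant in Young's estimate. Since a closed curve `Z` has `Z 0 = Z 1`, the term
`f 0 (Z 1 - Z 0)` in Young's estimate for `∫ f dZ` vanishes, and
`‖∫ f dZ‖ ≤ K ‖f‖_γ ‖Z‖_γ` (`young_bound`). As the velocity is by hypothesis the limit of
Riemann–Stieltjes sums over all partitions, it suffices to estimate the sums over dyadic
partitions, whose successive differences are bounded by a geometric series of ratio
`2 ^ (1 - 2γ) < 1`.

Applied to `f = A(x - Z)` and to `f = A(x - Z) - A(y - Z)`, this shows that `V^Z` is bounded and
Lipschitz, in both cases with constant `L = K ‖∇A‖_1 ‖Z‖_γ ^ 2` (`velocity_bound`,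
`velocity_lip`). If `‖Y‖_{𝐗_T} ≤ B`, integration in time gives
`‖F(Y)(t)‖_γ^* ≤ ‖X‖_γ^* + T K ‖∇A‖_1 B² (1 + B)`, and the same argument on `[s,t]` shows that
`F(Y)` is Lipschitz in time (`Fmap_invariant`). With `B = ‖X‖_γ^* + 1` the right-hand side is at
most `B` for small `T`. The integrand is measurable in time as a limit of dyadic sums, each of
which is continuous in time.
-/

/- Common framework: Hölder curves on [0,1], Riemann–Stieltjes/Young/rough integrals as
limits of (compensated) partition sums, controlled paths, and covariations. -/

noncomputable section

open Set Filter Topology MeasureTheory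
open scoped ENNReal

/-- Three dimensional Euclidean space. -/
abbrev E3 : Type := EuclideanSpace ℝ (Fin 3)

/-- `ℝ³ ⊗ ℝ³`, realized as (continuous) linear endomorphisms of `ℝ³`. -/
abbrev M3 : Type := E3 →L[ℝ] E3

/-- Outer (tensor) product `a ⊗ b` of two vectors, as the linear map `v ↦ ⟪b, v⟫ • a`. -/
def oProd (a b : E3) : M3 := (innerSL ℝ b).smulRight a

/-- The canonical basis vectors of `ℝ³`. -/
def e3 (k : Fin 3) : E3 := EuclideanSpace.single k 1

/-- The `i`-th component of a vector of `ℝ³`. -/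
def ecomp (i : Fin 3) (v : E3) : ℝ := @inner ℝ _ _ (e3 i) v

/-- The `(i,k)` entry of a matrix. -/
def mentry (i k : Fin 3) (M : M3) : ℝ := ecomp i (M (e3 k))

/-- `γ`-Hölder seminorm `‖X‖_γ` over the interval `[0,1]`. -/
def hSemi {F : Type*} [NormedAddCommGroup F] (γ : ℝ) (X : ℝ → F) : ℝ :=
  sSup {r | ∃ s ∈ Icc (0:ℝ) 1, ∃ t ∈ Icc (0:ℝ) 1, s ≠ t ∧ r = ‖X s - X t‖ / |s - t| ^ γ}

/-- Supremum norm `‖X‖_∞` over the interval `[0,1]`. -/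
def sNorm {F : Type*} [NormedAddCommGroup F] (X : ℝ → F) : ℝ :=
  sSup {r | ∃ s ∈ Icc (0:ℝ) 1, r = ‖X s‖}

/-- The norm `‖X‖_γ^* = ‖X‖_∞ + ‖X‖_γ`. -/
def hStar {F : Type*} [NormedAddCommGroup F] (γ : ℝ) (X : ℝ → F) : ℝ :=
  sNorm X + hSemi γ X

/-- `X` is `γ`-Hölder continuous on `[0,1]`. -/
def HolderOn {F : Type*} [NormedAddCommGroup F] (γ : ℝ) (X : ℝ → F) : Prop :=
  ∃ C : ℝ, ∀ s ∈ Icc (0:ℝ) 1, ∀ t ∈ Icc (0:ℝ) 1, ‖X s - X t‖ ≤ C * |s - t| ^ γ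

/-- A closed continuous curve parametrized by `[0,1]`. -/
def ClosedCurve {F : Type*} [NormedAddCommGroup F] (X : ℝ → F) : Prop :=
  ContinuousOn X (Icc (0:ℝ) 1) ∧ X 0 = X 1

/-- Membership in `𝒞^γ`: closed curve with finite `γ`-Hölder norm. -/
def MemC {F : Type*} [NormedAddCommGroup F] (γ : ℝ) (X : ℝ → F) : Prop :=
  ClosedCurve X ∧ HolderOn γ X

/-- A partition `a = t 0 ≤ t 1 ≤ ⋯ ≤ t n = b` of the interval `[a,b]`. -/
structure Ptn (a b : ℝ) where
  n : ℕ
  t : ℕ → ℝ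
  first : t 0 = a
  last : t n = b
  mono : ∀ i < n, t i ≤ t (i + 1)

/-- The mesh of the partition is at most `δ`. -/
def Ptn.MeshLE {a b : ℝ} (P : Ptn a b) (δ : ℝ) : Prop :=
  ∀ i < P.n, P.t (i + 1) - P.t i ≤ δ

/-- `I` is the limit of the partition sums `S P` as the mesh of `P` tends to zero. -/
def RSLimit {F : Type*} [NormedAddCommGroup F] (a b : ℝ) (S : Ptn a b → F) (I : F) : Prop :=
  ∀ ε > 0, ∃ δ > 0, ∀ P : Ptn a b, P.MeshLE δ → ‖S P - I‖ ≤ ε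

/-- `‖∇^j φ‖ = sup_x ‖∇^j φ(x)‖`. -/
def tnorm {F : Type*} [NormedAddCommGroup F] [NormedSpace ℝ F] (j : ℕ) (φ : E3 → F) : ℝ :=
  sSup (Set.range fun x => ‖iteratedFDeriv ℝ j φ x‖)

/-- `‖∇^m φ‖_n = Σ_{k=0}^n ‖∇^{m+k} φ‖`. -/
def nablaNorm {F : Type*} [NormedAddCommGroup F] [NormedSpace ℝ F]
    (m n : ℕ) (φ : E3 → F) : ℝ :=
  ∑ k ∈ Finset.range (n + 1), tnorm (m + k) φ

/-- `‖∇^m φ‖_n < ∞` : `φ` is `(m+n)` times continuously differentiable with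
`sup_x ‖∇^k φ(x)‖ < ∞` for every `m ≤ k ≤ m+n`. -/
def NablaBdd {F : Type*} [NormedAddCommGroup F] [NormedSpace ℝ F] (m n : ℕ) (φ : E3 → F) : Prop :=
  ContDiff ℝ (m + n) φ ∧
    ∀ k : ℕ, m ≤ k → k ≤ m + n → BddAbove (Set.range fun x => ‖iteratedFDeriv ℝ k φ x‖)

/-- Riemann–Stieltjes sum for the line integral `∫_0^1 A(x - Z_η) dZ_η`. -/
def youngRS (A : E3 → M3) (Z : ℝ → E3) (x : E3) {a b : ℝ} (P : Ptn a b) : E3 :=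
  ∑ i ∈ Finset.range P.n, A (x - Z (P.t i)) (Z (P.t (i + 1)) - Z (P.t i))

/-- `V = V^Z` is the Young velocity field `V^Z(x) = ∫_0^1 A(x - Z_η) dZ_η`, each value being
the limit of Riemann–Stieltjes sums. -/
def IsYoungVelocity (A : E3 → M3) (Z : ℝ → E3) (V : E3 → E3) : Prop :=
  ∀ x : E3, RSLimit 0 1 (fun P => youngRS A Z x P) (V x)

/-- `C` is a constant realizing the Young estimate
`|∫_η^ξ (X_ρ - X_η) ⊗ dY_ρ| ≤ C ‖X‖_γ ‖Y‖_γ |ξ - η|^{2γ}`. -/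
def YoungEstimate (γ C : ℝ) : Prop :=
  ∀ X Y : ℝ → E3, HolderOn γ X → HolderOn γ Y →
    ∀ η ∈ Icc (0:ℝ) 1, ∀ ξ ∈ Icc (0:ℝ) 1, η ≤ ξ →
      ∀ I : M3,
        RSLimit η ξ (fun P => ∑ i ∈ Finset.range P.n,
          oProd (X (P.t i) - X η) (Y (P.t (i + 1)) - Y (P.t i))) I →
        ‖I‖ ≤ C * hSemi γ X * hSemi γ Y * (ξ - η) ^ (2 * γ)

/-- Continuity of `t ↦ Y(t)` from `[0,T]` into `𝒞^γ` (with the norm `‖·‖_γ^*`). -/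
def ContXT (γ T : ℝ) (Y : ℝ → ℝ → E3) : Prop :=
  ∀ t ∈ Icc 0 T, ∀ ε > 0, ∃ δ > 0, ∀ s ∈ Icc 0 T, |s - t| ≤ δ →
    hStar γ (fun ξ => Y s ξ - Y t ξ) ≤ ε

/-- The norm `‖Y‖_{𝐗_T} = sup_{t ∈ [0,T]} ‖Y(t)‖_γ^*`. -/
def xnorm (γ T : ℝ) (Y : ℝ → ℝ → E3) : ℝ :=
  sSup {r | ∃ t ∈ Icc 0 T, r = hStar γ (Y t)}

/-- Membership in `𝐗_T = C([0,T], 𝒞^γ)`. -/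
def MemXT (γ T : ℝ) (Y : ℝ → ℝ → E3) : Prop :=
  (∀ t ∈ Icc 0 T, MemC γ (Y t)) ∧ ContXT γ T Y

/-- The map `F(Y)(t)_ξ = X_ξ + ∫_0^t v_s(Y(s)_ξ) ds`. -/
def Fmap (X : ℝ → E3) (v : ℝ → E3 → E3) (Y : ℝ → ℝ → E3) : ℝ → ℝ → E3 :=
  fun t ξ => X ξ + ∫ s in (0:ℝ)..t, v s (Y s ξ)

/-- The controlled derivative of `F(Y)`:
`F(Y)'(t)_ξ = Id + ∫_0^t ∇v_s(Y(s)_ξ) ∘ Y'(s)_ξ ds`. -/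
def Fmap' (v : ℝ → E3 → E3) (Y : ℝ → ℝ → E3) (Y' : ℝ → ℝ → M3) : ℝ → ℝ → M3 :=
  fun t ξ => ContinuousLinearMap.id ℝ E3
    + ∫ s in (0:ℝ)..t, (fderiv ℝ (v s) (Y s ξ)).comp (Y' s ξ)

/-- `Y` solves the vortex filament equation on `[0,T]` with initial condition `X`,
the velocity fields being given by Young line integrals. -/
def IsYoungSolution (T : ℝ) (A : E3 → M3) (X : ℝ → E3) (Y : ℝ → ℝ → E3) : Prop :=
  ∃ v : ℝ → E3 → E3, (∀ s ∈ Icc 0 T, IsYoungVelocity A (Y s) (v s)) ∧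
    ∀ t ∈ Icc 0 T, ∀ ξ ∈ Icc (0:ℝ) 1, Y t ξ = X ξ + ∫ s in (0:ℝ)..t, v s (Y s ξ)

/-- The same, on the half open interval `[0,T)`. -/
def IsYoungSolutionLt (T : ℝ) (A : E3 → M3) (X : ℝ → E3) (Y : ℝ → ℝ → E3) : Prop :=
  ∃ v : ℝ → E3 → E3, (∀ s ∈ Ico 0 T, IsYoungVelocity A (Y s) (v s)) ∧
    ∀ t ∈ Ico 0 T, ∀ ξ ∈ Icc (0:ℝ) 1, Y t ξ = X ξ + ∫ s in (0:ℝ)..t, v s (Y s ξ)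

/-- `β`-Hölder norm of a two-parameter function on `[0,1]²` (vanishing on the diagonal). -/
def rnorm {F : Type*} [NormedAddCommGroup F] (β : ℝ) (W : ℝ → ℝ → F) : ℝ :=
  sSup {r | ∃ s ∈ Icc (0:ℝ) 1, ∃ t ∈ Icc (0:ℝ) 1, s ≠ t ∧ r = ‖W s t‖ / |s - t| ^ β}

/-- Finiteness of the `β`-Hölder norm of a two-parameter function. -/
def RBddOn {F : Type*} [NormedAddCommGroup F] (β : ℝ) (W : ℝ → ℝ → F) : Prop :=
  ∃ C : ℝ, ∀ s ∈ Icc (0:ℝ) 1, ∀ t ∈ Icc (0:ℝ) 1, ‖W s t‖ ≤ C * |s - t| ^ β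

/-- `(X, 𝕏²)` is a `γ`-rough path: `X` is `γ`-Hölder, the area process `𝕏²` is continuous,
satisfies the compatibility (Chen) relation and has finite `2γ`-Hölder norm. -/
structure IsRoughPath (γ : ℝ) (X : ℝ → E3) (XX : ℝ → ℝ → M3) : Prop where
  cont : ContinuousOn X (Icc (0:ℝ) 1)
  holder : HolderOn γ X
  cont2 : ContinuousOn (fun p : ℝ × ℝ => XX p.1 p.2) (Icc (0:ℝ) 1 ×ˢ Icc (0:ℝ) 1)
  chen : ∀ ξ ∈ Icc (0:ℝ) 1, ∀ η ∈ Icc (0:ℝ) 1, ∀ ρ ∈ Icc (0:ℝ) 1,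
    XX ξ ρ - XX ξ η - XX η ρ = oProd (X ξ - X η) (X η - X ρ)
  bdd : RBddOn (2 * γ) XX

/-- Remainder `R^Y_{ηξ} = Y_ξ - Y_η - Y'_η (X_ξ - X_η)` of a controlled path. -/
def ctrlRem (X Y : ℝ → E3) (Y' : ℝ → M3) (η ξ : ℝ) : E3 :=
  Y ξ - Y η - Y' η (X ξ - X η)

/-- `(Y, Y')` is a (closed) path weakly controlled by `X`, i.e. `Y ∈ 𝒟_X`. -/
structure IsControlled (γ : ℝ) (X Y : ℝ → E3) (Y' : ℝ → M3) : Prop where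
  closed : Y 0 = Y 1
  cont : ContinuousOn Y (Icc (0:ℝ) 1)
  contD : ContinuousOn Y' (Icc (0:ℝ) 1)
  holderD : HolderOn γ Y'
  rem : RBddOn (2 * γ) (fun η ξ => ctrlRem X Y Y' η ξ)

/-- The norm `‖Y‖_D = ‖Y'‖_γ + ‖R^Y‖_{2γ} + ‖Y'‖_∞` on `𝒟_X`. -/
def dnorm (γ : ℝ) (X Y : ℝ → E3) (Y' : ℝ → M3) : ℝ :=
  hSemi γ Y' + rnorm (2 * γ) (fun η ξ => ctrlRem X Y Y' η ξ) + sNorm Y'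

/-- The norm `‖Y‖_D^* = ‖Y‖_D + ‖Y‖_∞`. -/
def dnormStar (γ : ℝ) (X Y : ℝ → E3) (Y' : ℝ → M3) : ℝ :=
  dnorm γ X Y Y' + sNorm Y

/-- The constant `C_X = 1 + ‖X‖_γ + ‖𝕏²‖_{2γ}`. -/
def CXconst (γ : ℝ) (X : ℝ → E3) (XX : ℝ → ℝ → M3) : ℝ :=
  1 + hSemi γ X + rnorm (2 * γ) XX

/-- The compensator `P W Qᵀ` (matrix product), i.e. `(P W Qᵀ)^{ij} = P^{ik} W^{kl} Q^{jl}`. -/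
def ctrlComp (P Q W : M3) : M3 := P ∘L W ∘L (ContinuousLinearMap.adjoint Q)

/-- Compensated Riemann sum
`Σ_i [ Y_{t_i} ⊗ (Z_{t_{i+1}} - Z_{t_i}) + Y'_{t_i} Z'_{t_i} 𝕏²_{t_{i+1} t_i} ]`
for the rough integral `∫ Y ⊗ dZ` of two weakly controlled paths. -/
def roughPairRS (XX : ℝ → ℝ → M3) (Y Z : ℝ → E3) (Y' Z' : ℝ → M3)
    {a b : ℝ} (P : Ptn a b) : M3 :=
  ∑ i ∈ Finset.range P.n,
    (oProd (Y (P.t i)) (Z (P.t (i + 1)) - Z (P.t i))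
      + ctrlComp (Y' (P.t i)) (Z' (P.t i)) (XX (P.t (i + 1)) (P.t i)))

/-- The contraction `Σ_{k,l} W^{kl} (W'(e_k))(Z'(e_l))`, the compensator of a matrix-valued
controlled integrand `W` (with controlled derivative `W'`) against `dZ`. -/
def comp2 (W' : E3 →L[ℝ] M3) (Z' : M3) (W : M3) : E3 :=
  ∑ k : Fin 3, ∑ l : Fin 3, ecomp k (W (e3 l)) • (W' (e3 k)) (Z' (e3 l))

/-- Compensated Riemann sum for the rough line integral `∫_0^1 A(x - Z_η) dZ_η` along a path
`Z` weakly controlled by `X`, the integrand `η ↦ A(x - Z_η)` having controlled derivative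
`-∇A(x - Z_η) ∘ Z'_η`. -/
def roughVelRS (A : E3 → M3) (XX : ℝ → ℝ → M3) (Z : ℝ → E3) (Z' : ℝ → M3)
    (x : E3) {a b : ℝ} (P : Ptn a b) : E3 :=
  ∑ i ∈ Finset.range P.n,
    (A (x - Z (P.t i)) (Z (P.t (i + 1)) - Z (P.t i))
      + comp2 (-((fderiv ℝ A (x - Z (P.t i))).comp (Z' (P.t i)))) (Z' (P.t i))
          (XX (P.t (i + 1)) (P.t i)))

/-- `V = V^Z` is the rough velocity field `V^Z(x) = ∫_0^1 A(x - Z_η) dZ_η`, each value being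
the limit of compensated Riemann sums. -/
def IsRoughVelocity (A : E3 → M3) (XX : ℝ → ℝ → M3) (Z : ℝ → E3) (Z' : ℝ → M3)
    (V : E3 → E3) : Prop :=
  ∀ x : E3, RSLimit 0 1 (fun P => roughVelRS A XX Z Z' x P) (V x)

/-- Continuity of `t ↦ (Y(t), Y'(t))` from `[0,T]` into `𝒟_X` (with the norm `‖·‖_D^*`). -/
def ContDT (γ T : ℝ) (X : ℝ → E3) (Y : ℝ → ℝ → E3) (Y' : ℝ → ℝ → M3) : Prop :=
  ∀ t ∈ Icc 0 T, ∀ ε > 0, ∃ δ > 0, ∀ s ∈ Icc 0 T, |s - t| ≤ δ →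
    dnormStar γ X (fun ξ => Y s ξ - Y t ξ) (fun ξ => Y' s ξ - Y' t ξ) ≤ ε

/-- Membership in `𝐃_{X,T} = C([0,T], 𝒟_X)`. -/
def MemDT (γ T : ℝ) (X : ℝ → E3) (Y : ℝ → ℝ → E3) (Y' : ℝ → ℝ → M3) : Prop :=
  (∀ t ∈ Icc 0 T, IsControlled γ X (Y t) (Y' t)) ∧ ContDT γ T X Y Y'

/-- The norm `‖Y‖_{𝐃_{X,T}} = sup_{t ∈ [0,T]} ‖Y(t)‖_D^*`. -/
def dxnorm (γ T : ℝ) (X : ℝ → E3) (Y : ℝ → ℝ → E3) (Y' : ℝ → ℝ → M3) : ℝ :=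
  sSup {r | ∃ t ∈ Icc 0 T, r = dnormStar γ X (Y t) (Y' t)}

/-- `(Y, Y')` solves the vortex filament equation on `[0,T]` with initial condition `X`,
the velocity fields being given by rough line integrals over the rough path `(X, 𝕏²)`. -/
def IsRoughSolution (T : ℝ) (A : E3 → M3) (X : ℝ → E3) (XX : ℝ → ℝ → M3)
    (Y : ℝ → ℝ → E3) (Y' : ℝ → ℝ → M3) : Prop :=
  ∃ v : ℝ → E3 → E3,
    (∀ s ∈ Icc 0 T, IsRoughVelocity A XX (Y s) (Y' s) (v s)) ∧
    (∀ t ∈ Icc 0 T, ∀ ξ ∈ Icc (0:ℝ) 1, Y t ξ = X ξ + ∫ s in (0:ℝ)..t, v s (Y s ξ)) ∧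
    (∀ t ∈ Icc 0 T, ∀ ξ ∈ Icc (0:ℝ) 1, Y' t ξ = Fmap' v Y Y' t ξ)

/-- `YY` is the lift (area process) `𝕐²_{ab} = ∫_a^b (Y_η - Y_a) ⊗ dY_η` of the weakly
controlled path `(Y, Y')`, defined through compensated Riemann sums. -/
def IsLift (XX : ℝ → ℝ → M3) (Y : ℝ → E3) (Y' : ℝ → M3) (YY : ℝ → ℝ → M3) : Prop :=
  ∀ a ∈ Icc (0:ℝ) 1, ∀ b ∈ Icc (0:ℝ) 1, a ≤ b →
    RSLimit a b (fun P => ∑ i ∈ Finset.range P.n,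
      (oProd (Y (P.t i) - Y a) (Y (P.t (i + 1)) - Y (P.t i))
        + ctrlComp (Y' (P.t i)) (Y' (P.t i)) (XX (P.t (i + 1)) (P.t i)))) (YY a b)

/-- `ε`-approximation `ξ ↦ ∫_0^ξ (U_{ρ+ε} - U_ρ)(W_{ρ+ε} - W_ρ) dρ / ε` of the covariation
(the processes being extended by their value at `1`). -/
def covApprox (U W : ℝ → ℝ) (ε ξ : ℝ) : ℝ :=
  ∫ ρ in (0:ℝ)..ξ, (U (min (ρ + ε) 1) - U ρ) * (W (min (ρ + ε) 1) - W ρ) / ε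

/-- `C = [U, W]` is the covariation of the processes `U` and `W`: the `ε`-approximations
converge uniformly in probability (ucp) as `ε → 0⁺`. -/
def HasCovariation {Ω : Type*} [MeasurableSpace Ω] (P : Measure Ω)
    (U W : Ω → ℝ → ℝ) (C : Ω → ℝ → ℝ) : Prop :=
  ∀ δ : ℝ, 0 < δ →
    Tendsto (fun ε : ℝ =>
        P {ω | δ ≤ ⨆ ξ : Icc (0:ℝ) 1, |covApprox (U ω) (W ω) ε ξ.1 - C ω ξ.1|})
      (𝓝[>] (0:ℝ)) (𝓝 (0:ℝ≥0∞))

/-! ### Hölder and supremum norms -/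

lemma hSemi_nonneg {F : Type*} [NormedAddCommGroup F] (γ : ℝ) (X : ℝ → F) : 0 ≤ hSemi γ X := by
  apply Real.sSup_nonneg
  rintro r ⟨s, _, t, _, _, rfl⟩
  positivity

lemma sNorm_nonneg {F : Type*} [NormedAddCommGroup F] (X : ℝ → F) : 0 ≤ sNorm X := by
  apply Real.sSup_nonneg
  rintro r ⟨s, _, rfl⟩
  positivity

lemma hStar_nonneg {F : Type*} [NormedAddCommGroup F] (γ : ℝ) (X : ℝ → F) : 0 ≤ hStar γ X :=
  add_nonneg (sNorm_nonneg X) (hSemi_nonneg γ X)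

lemma hSemi_le {F : Type*} [NormedAddCommGroup F] {γ C : ℝ} {X : ℝ → F} (hC : 0 ≤ C)
    (h : ∀ s ∈ Icc (0:ℝ) 1, ∀ t ∈ Icc (0:ℝ) 1, ‖X s - X t‖ ≤ C * |s - t| ^ γ) :
    hSemi γ X ≤ C := by
  apply Real.sSup_le _ hC
  rintro r ⟨s, hs, t, ht, hst, rfl⟩
  have : 0 < |s - t| ^ γ := Real.rpow_pos_of_pos (abs_pos.2 (sub_ne_zero.2 hst)) _
  rw [div_le_iff₀ this]
  exact h s hs t ht

lemma sNorm_le {F : Type*} [NormedAddCommGroup F] {C : ℝ} {X : ℝ → F} (hC : 0 ≤ C)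
    (h : ∀ s ∈ Icc (0:ℝ) 1, ‖X s‖ ≤ C) : sNorm X ≤ C := by
  apply Real.sSup_le _ hC
  rintro r ⟨s, hs, rfl⟩
  exact h s hs

lemma HolderOn.bound {F : Type*} [NormedAddCommGroup F] {γ : ℝ} {X : ℝ → F} (h : HolderOn γ X)
    {s t : ℝ} (hs : s ∈ Icc (0:ℝ) 1) (ht : t ∈ Icc (0:ℝ) 1) :
    ‖X s - X t‖ ≤ hSemi γ X * |s - t| ^ γ := by
  by_cases hst : s = t
  · subst hst
    simpa using mul_nonneg (hSemi_nonneg γ X) (Real.rpow_nonneg le_rfl γ)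
  have hpos : ∀ {s t : ℝ}, s ≠ t → 0 < |s - t| ^ γ := fun hst =>
    Real.rpow_pos_of_pos (abs_pos.2 (sub_ne_zero.2 hst)) _
  rw [← div_le_iff₀ (hpos hst)]
  obtain ⟨C, hC⟩ := h
  refine le_csSup ⟨C, ?_⟩ ⟨s, hs, t, ht, hst, rfl⟩
  rintro r ⟨s, hs, t, ht, hst, rfl⟩
  rw [div_le_iff₀ (hpos hst)]
  exact hC s hs t ht

lemma MemC.norm_le {F : Type*} [NormedAddCommGroup F] {γ : ℝ} {X : ℝ → F} (h : MemC γ X)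
    {s : ℝ} (hs : s ∈ Icc (0:ℝ) 1) : ‖X s‖ ≤ sNorm X := by
  refine le_csSup ?_ ⟨s, hs, rfl⟩
  obtain ⟨C, hC⟩ := isCompact_Icc.exists_bound_of_continuousOn h.1.1
  refine ⟨C, ?_⟩
  rintro r ⟨s, hs, rfl⟩
  exact hC s hs

lemma HolderOn.continuousOn {F : Type*} [NormedAddCommGroup F] {γ : ℝ} (hγ : 0 < γ) {X : ℝ → F}
    (h : HolderOn γ X) : ContinuousOn X (Icc (0:ℝ) 1) := by
  intro s hs
  rw [ContinuousWithinAt, tendsto_iff_norm_sub_tendsto_zero]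
  have hlim : Tendsto (fun t : ℝ => hSemi γ X * |t - s| ^ γ) (𝓝[Icc 0 1] s) (𝓝 0) := by
    have : Continuous fun t : ℝ => hSemi γ X * |t - s| ^ γ :=
      continuous_const.mul ((continuous_id.sub continuous_const).abs.rpow_const
        fun _ => Or.inr hγ.le)
    have h0 := this.tendsto s
    simp only [sub_self, abs_zero, Real.zero_rpow hγ.ne', mul_zero] at h0
    exact h0.mono_left nhdsWithin_le_nhds
  refine squeeze_zero' (Eventually.of_forall fun _ => norm_nonneg _) ?_ hlim
  filter_upwards [self_mem_nhdsWithin] with t ht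
  exact h.bound ht hs

lemma MemC.sub {γ : ℝ} {X Y : ℝ → E3} (hX : MemC γ X) (hY : MemC γ Y) :
    MemC γ (fun ξ => X ξ - Y ξ) := by
  refine ⟨⟨hX.1.1.sub hY.1.1, by simp only [hX.1.2, hY.1.2]⟩, hSemi γ X + hSemi γ Y, ?_⟩
  intro s hs t ht
  calc ‖X s - Y s - (X t - Y t)‖ = ‖(X s - X t) - (Y s - Y t)‖ := by congr 1; abel
    _ ≤ ‖X s - X t‖ + ‖Y s - Y t‖ := norm_sub_le _ _
    _ ≤ _ := by
      rw [add_mul]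
      exact add_le_add (hX.2.bound hs ht) (hY.2.bound hs ht)

lemma hStar_add_le {γ : ℝ} {X Y : ℝ → E3} (hX : MemC γ X) (hY : MemC γ Y) :
    hStar γ X ≤ hStar γ Y + hStar γ (fun ξ => X ξ - Y ξ) := by
  have hD := hX.sub hY
  have h1 : sNorm X ≤ sNorm Y + sNorm (fun ξ => X ξ - Y ξ) := by
    refine sNorm_le (add_nonneg (sNorm_nonneg _) (sNorm_nonneg _)) fun s hs => ?_
    calc ‖X s‖ = ‖Y s + (X s - Y s)‖ := by congr 1; abel
      _ ≤ ‖Y s‖ + ‖X s - Y s‖ := norm_add_le _ _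
      _ ≤ _ := add_le_add (hY.norm_le hs) (hD.norm_le hs)
  have h2 : hSemi γ X ≤ hSemi γ Y + hSemi γ (fun ξ => X ξ - Y ξ) := by
    refine hSemi_le (add_nonneg (hSemi_nonneg _ _) (hSemi_nonneg _ _)) fun s hs t ht => ?_
    calc ‖X s - X t‖ = ‖(Y s - Y t) + ((X s - Y s) - (X t - Y t))‖ := by congr 1; abel
      _ ≤ ‖Y s - Y t‖ + ‖(X s - Y s) - (X t - Y t)‖ := norm_add_le _ _
      _ ≤ _ := by
        rw [add_mul]
        exact add_le_add (hY.2.bound hs ht) (hD.2.bound hs ht)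
  unfold hStar
  linarith

/-- The set whose supremum is `‖Y‖_{𝐗_T}` is bounded, so that the supremum is not a junk value;
this is compactness of `[0,T]`. -/
lemma MemXT.bddAbove {γ T : ℝ} {Y : ℝ → ℝ → E3} (h : MemXT γ T Y) :
    BddAbove {r | ∃ t ∈ Icc 0 T, r = hStar γ (Y t)} := by
  have key : ∃ C, ∀ t ∈ Icc 0 T, t ∈ Icc 0 T → hStar γ (Y t) ≤ C := by
    refine isCompact_Icc.induction_on (p := fun S => ∃ C, ∀ t ∈ S, t ∈ Icc 0 T →
      hStar γ (Y t) ≤ C) ⟨0, by simp⟩ ?_ ?_ ?_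
    · rintro S S' hSS ⟨C, hC⟩
      exact ⟨C, fun t ht => hC t (hSS ht)⟩
    · rintro S S' ⟨C, hC⟩ ⟨C', hC'⟩
      refine ⟨max C C', fun t ht htI => ?_⟩
      rcases ht with ht | ht
      · exact (hC t ht htI).trans (le_max_left _ _)
      · exact (hC' t ht htI).trans (le_max_right _ _)
    · intro t ht
      obtain ⟨δ, hδ, hs⟩ := h.2 t ht 1 one_pos
      refine ⟨Metric.closedBall t δ, mem_nhdsWithin_of_mem_nhds (Metric.closedBall_mem_nhds t hδ),
        hStar γ (Y t) + 1, fun s hsb hsI => ?_⟩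
      have := hs s hsI (by simpa [Real.dist_eq] using hsb)
      exact (hStar_add_le (h.1 s hsI) (h.1 t ht)).trans (by linarith)
  obtain ⟨C, hC⟩ := key
  refine ⟨C, ?_⟩
  rintro r ⟨t, ht, rfl⟩
  exact hC t ht ht

lemma MemXT.hStar_le {γ T : ℝ} {Y : ℝ → ℝ → E3} (h : MemXT γ T Y) {t : ℝ} (ht : t ∈ Icc 0 T) :
    hStar γ (Y t) ≤ xnorm γ T Y :=
  le_csSup h.bddAbove ⟨t, ht, rfl⟩

lemma MemXT.continuousOn {γ T : ℝ} {Y : ℝ → ℝ → E3} (h : MemXT γ T Y) {ξ : ℝ}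
    (hξ : ξ ∈ Icc (0:ℝ) 1) : ContinuousOn (fun s => Y s ξ) (Icc 0 T) := by
  rw [Metric.continuousOn_iff]
  intro t ht ε hε
  obtain ⟨δ, hδ, hs⟩ := h.2 t ht (ε / 2) (half_pos hε)
  refine ⟨δ, hδ, fun s hsI hst => ?_⟩
  have h1 := hs s hsI (by rw [← Real.dist_eq]; exact hst.le)
  have h2 := ((h.1 s hsI).sub (h.1 t ht)).norm_le hξ
  have h3 := hSemi_nonneg γ (fun ξ => Y s ξ - Y t ξ)
  rw [dist_eq_norm]
  unfold hStar at h1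
  linarith

/-! ### The Young estimate along dyadic partitions -/

/-- The uniform partition of `[0,1]` into `2 ^ k` intervals. -/
def dyadicPtn (k : ℕ) : Ptn 0 1 where
  n := 2 ^ k
  t i := i / 2 ^ k
  first := by simp
  last := by simp
  mono i _ := by push_cast; gcongr; linarith

/-- Riemann–Stieltjes sum of `∫_0^1 f dZ` along the partition into `2 ^ k` equal intervals. -/
def dyadicSum (f : ℝ → M3) (Z : ℝ → E3) (k : ℕ) : E3 :=
  ∑ i ∈ Finset.range (2 ^ k),
    f (i / 2 ^ k) (Z ((i + 1) / 2 ^ k) - Z (i / 2 ^ k))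

lemma sum_range_two_mul {F : Type*} [AddCommMonoid F] (g : ℕ → F) (m : ℕ) :
    ∑ i ∈ Finset.range (2 * m), g i = ∑ i ∈ Finset.range m, (g (2 * i) + g (2 * i + 1)) := by
  induction m with
  | zero => simp
  | succ m ih =>
    rw [Finset.sum_range_succ, ← ih, show 2 * (m + 1) = 2 * m + 1 + 1 by ring,
      Finset.sum_range_succ, Finset.sum_range_succ, add_assoc]

lemma dyadicSum_succ_sub (f : ℝ → M3) (Z : ℝ → E3) (k : ℕ) :
    dyadicSum f Z (k + 1) - dyadicSum f Z k = ∑ i ∈ Finset.range (2 ^ k),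
      (f ((2 * i + 1) / 2 ^ (k + 1)) - f (i / 2 ^ k))
        (Z ((i + 1) / 2 ^ k) - Z ((2 * i + 1) / 2 ^ (k + 1))) := by
  unfold dyadicSum
  rw [pow_succ' 2 k, sum_range_two_mul, ← Finset.sum_sub_distrib]
  refine Finset.sum_congr rfl fun i _ => ?_
  have e1 : ((2 * i : ℕ) : ℝ) / 2 ^ (k + 1) = i / 2 ^ k := by
    push_cast; rw [pow_succ']; field_simp
  have e2 : (((2 * i + 1 : ℕ) : ℝ) + 1) / 2 ^ (k + 1) = (i + 1) / 2 ^ k := by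
    push_cast; rw [pow_succ']; field_simp; ring
  have e3 : ((2 * i : ℕ) + 1 : ℝ) / 2 ^ (k + 1) = (2 * i + 1) / 2 ^ (k + 1) := by
    push_cast; ring
  have e4 : ((2 * i + 1 : ℕ) : ℝ) / 2 ^ (k + 1) = (2 * i + 1) / 2 ^ (k + 1) := by
    push_cast; ring
  rw [e1, e2, e3, e4]
  simp only [map_sub, sub_apply]
  abel

/-- The ratio `2 ^ (1 - 2γ)` of the geometric series in Young's estimate. -/
def yRatio (γ : ℝ) : ℝ := 2 * (1 / 2 : ℝ) ^ (2 * γ)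

/-- The constant in Young's estimate. -/
def yConst (γ : ℝ) : ℝ := (1 / 2 : ℝ) ^ (2 * γ) / (1 - yRatio γ)

lemma yRatio_lt_one {γ : ℝ} (hγ : 1 / 2 < γ) : yRatio γ < 1 := by
  have : (1 / 2 : ℝ) ^ (2 * γ) < (1 / 2 : ℝ) ^ (1 : ℝ) :=
    Real.rpow_lt_rpow_of_exponent_gt (by norm_num) (by norm_num) (by linarith)
  rw [Real.rpow_one] at this
  unfold yRatio
  linarith

lemma yConst_nonneg {γ : ℝ} (hγ : 1 / 2 < γ) : 0 ≤ yConst γ :=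
  div_nonneg (by positivity) (by linarith [yRatio_lt_one hγ])

lemma dyadicSum_dist_le {γ a b : ℝ} {f : ℝ → M3} {Z : ℝ → E3} (ha : 0 ≤ a)
    (hf : ∀ s ∈ Icc (0:ℝ) 1, ∀ t ∈ Icc (0:ℝ) 1, ‖f s - f t‖ ≤ a * |s - t| ^ γ)
    (hZ : ∀ s ∈ Icc (0:ℝ) 1, ∀ t ∈ Icc (0:ℝ) 1, ‖Z s - Z t‖ ≤ b * |s - t| ^ γ) (k : ℕ) :
    dist (dyadicSum f Z k) (dyadicSum f Z (k + 1)) ≤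
      a * b * (1 / 2 : ℝ) ^ (2 * γ) * yRatio γ ^ k := by
  rw [dist_comm, dist_eq_norm, dyadicSum_succ_sub]
  set h : ℝ := (1 / 2) ^ (k + 1) with hh
  have hhpos : 0 < h := by positivity
  have hterm : ∀ i ∈ Finset.range (2 ^ k),
      ‖(f ((2 * i + 1) / 2 ^ (k + 1)) - f (i / 2 ^ k))
        (Z ((i + 1) / 2 ^ k) - Z ((2 * i + 1) / 2 ^ (k + 1)))‖ ≤ a * h ^ γ * (b * h ^ γ) := by
    intro i hi
    have hi' : (i : ℝ) + 1 ≤ 2 ^ k := by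
      exact_mod_cast Finset.mem_range.1 hi
    have hi0 : (0 : ℝ) ≤ i := Nat.cast_nonneg i
    have m1 : ((2 * i + 1) / 2 ^ (k + 1) : ℝ) ∈ Icc (0 : ℝ) 1 := by
      refine ⟨by positivity, ?_⟩
      rw [div_le_one (by positivity), pow_succ']
      linarith
    have m2 : (i / 2 ^ k : ℝ) ∈ Icc (0 : ℝ) 1 := by
      refine ⟨by positivity, ?_⟩
      rw [div_le_one (by positivity)]
      linarith
    have m3 : ((i + 1) / 2 ^ k : ℝ) ∈ Icc (0 : ℝ) 1 := by
      refine ⟨by positivity, ?_⟩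
      rw [div_le_one (by positivity)]
      linarith
    have d1 : ((2 * i + 1) / 2 ^ (k + 1) - i / 2 ^ k : ℝ) = h := by
      rw [hh, one_div_pow, pow_succ']; field_simp; ring
    have d2 : ((i + 1) / 2 ^ k - (2 * i + 1) / 2 ^ (k + 1) : ℝ) = h := by
      rw [hh, one_div_pow, pow_succ']; field_simp; ring
    have b1 := hf _ m1 _ m2
    have b2 := hZ _ m3 _ m1
    rw [d1, abs_of_pos hhpos] at b1
    rw [d2, abs_of_pos hhpos] at b2
    exact (ContinuousLinearMap.le_opNorm _ _).trans
      (mul_le_mul b1 b2 (norm_nonneg _) (by positivity))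
  refine (norm_sum_le_of_le _ hterm).trans (le_of_eq ?_)
  have hpow : h ^ γ * h ^ γ = ((1 / 2 : ℝ) ^ (2 * γ)) ^ (k + 1) := by
    rw [← Real.rpow_add hhpos, hh, ← Real.rpow_natCast, ← Real.rpow_natCast,
      ← Real.rpow_mul (by norm_num), ← Real.rpow_mul (by norm_num)]
    congr 1; ring
  rw [Finset.sum_const, Finset.card_range, nsmul_eq_mul]
  push_cast
  calc (2 : ℝ) ^ k * (a * h ^ γ * (b * h ^ γ)) = 2 ^ k * a * b * (h ^ γ * h ^ γ) := by ring
    _ = _ := by rw [hpow, yRatio, mul_pow, pow_succ]; ring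

/-- Young's estimate for a closed curve: the zeroth-order term `f 0 (Z 1 - Z 0)` vanishes. -/
lemma young_bound {γ a b : ℝ} (hγ : 1 / 2 < γ) {f : ℝ → M3} {Z : ℝ → E3} {I : E3} (ha : 0 ≤ a)
    (hf : ∀ s ∈ Icc (0:ℝ) 1, ∀ t ∈ Icc (0:ℝ) 1, ‖f s - f t‖ ≤ a * |s - t| ^ γ)
    (hZ : ∀ s ∈ Icc (0:ℝ) 1, ∀ t ∈ Icc (0:ℝ) 1, ‖Z s - Z t‖ ≤ b * |s - t| ^ γ)
    (hcl : Z 0 = Z 1) (hI : Tendsto (dyadicSum f Z) atTop (𝓝 I)) :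
    ‖I‖ ≤ yConst γ * a * b := by
  have h := dist_le_of_le_geometric_of_tendsto₀ _ _ (yRatio_lt_one hγ)
    (dyadicSum_dist_le ha hf hZ) hI
  have h0 : dyadicSum f Z 0 = 0 := by simp [dyadicSum, hcl]
  rw [h0, dist_zero_left] at h
  refine h.trans (le_of_eq ?_)
  unfold yConst
  ring

lemma IsYoungVelocity.tendsto {A : E3 → M3} {Z : ℝ → E3} {V : E3 → E3}
    (h : IsYoungVelocity A Z V) (x : E3) :
    Tendsto (dyadicSum (fun ξ => A (x - Z ξ)) Z) atTop (𝓝 (V x)) := by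
  have hd : ∀ k, dyadicSum (fun ξ => A (x - Z ξ)) Z k = youngRS A Z x (dyadicPtn k) := by
    intro k
    simp [dyadicSum, youngRS, dyadicPtn]
  rw [tendsto_iff_norm_sub_tendsto_zero, Metric.tendsto_atTop]
  intro ε hε
  obtain ⟨δ, hδ, hP⟩ := h x (ε / 2) (half_pos hε)
  obtain ⟨N, hN⟩ := exists_pow_lt_of_lt_one hδ (by norm_num : (1 / 2 : ℝ) < 1)
  refine ⟨N, fun k hk => ?_⟩
  have hmesh : (dyadicPtn k).MeshLE δ := by
    intro i _
    have e : (dyadicPtn k).t (i + 1) - (dyadicPtn k).t i = (1 / 2) ^ k := by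
      simp only [dyadicPtn, one_div_pow]
      push_cast
      field_simp
      ring
    rw [e]
    exact (pow_le_pow_of_le_one (by norm_num) (by norm_num) hk).trans hN.le
  have := hP _ hmesh
  rw [hd, dist_zero_right, norm_norm]
  linarith

/-! ### Bounds for the velocity field -/

/-- Bounds on the first two derivatives control first and mixed second differences. -/
lemma diff_bounds {E F : Type*} [NormedAddCommGroup E] [NormedSpace ℝ E] [NormedAddCommGroup F]
    [NormedSpace ℝ F] {A : E → F} {N : ℝ} (hC : ContDiff ℝ 2 A)
    (h1 : ∀ z, ‖iteratedFDeriv ℝ 1 A z‖ ≤ N) (h2 : ∀ z, ‖iteratedFDeriv ℝ 2 A z‖ ≤ N) (x y : E) :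
    ‖A x - A y‖ ≤ N * ‖x - y‖ ∧
    ∀ a b : E, ‖(A (x - a) - A (y - a)) - (A (x - b) - A (y - b))‖ ≤ N * ‖x - y‖ * ‖a - b‖ := by
  have hd : Differentiable ℝ A := hC.differentiable (by norm_num)
  have hd' : Differentiable ℝ (fderiv ℝ A) :=
    (hC.fderiv_right (m := 1) (by norm_num)).differentiable (by norm_num)
  have b1 : ∀ z, ‖fderiv ℝ A z‖ ≤ N := fun z => by
    simpa only [← norm_iteratedFDeriv_fderiv, norm_iteratedFDeriv_zero] using h1 z
  have b2 : ∀ z, ‖fderiv ℝ (fderiv ℝ A) z‖ ≤ N := fun z => by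
    simpa only [← norm_iteratedFDeriv_fderiv, norm_iteratedFDeriv_zero] using h2 z
  have l2 : ∀ z w, ‖fderiv ℝ A z - fderiv ℝ A w‖ ≤ N * ‖z - w‖ := fun z w =>
    convex_univ.norm_image_sub_le_of_norm_fderiv_le (fun p _ => hd' p) (fun p _ => b2 p)
      (mem_univ w) (mem_univ z)
  refine ⟨convex_univ.norm_image_sub_le_of_norm_fderiv_le (fun p _ => hd p) (fun p _ => b1 p)
      (mem_univ y) (mem_univ x), fun a b => ?_⟩
  have hg : ∀ z, HasFDerivAt (fun z => A (z - a) - A (z - b))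
      (fderiv ℝ A (z - a) - fderiv ℝ A (z - b)) z := fun z =>
    ((hd (z - a)).hasFDerivAt.comp z ((hasFDerivAt_id z).sub_const a)).sub
      ((hd (z - b)).hasFDerivAt.comp z ((hasFDerivAt_id z).sub_const b))
  have := convex_univ.norm_image_sub_le_of_norm_hasFDerivWithin_le
    (fun z _ => (hg z).hasFDerivWithinAt)
    (fun z _ => show _ ≤ N * ‖a - b‖ by
      have := l2 (z - a) (z - b)
      rwa [sub_sub_sub_cancel_left, norm_sub_rev b a] at this)
    (mem_univ y) (mem_univ x)
  calc _ = ‖(A (x - a) - A (x - b)) - (A (y - a) - A (y - b))‖ := by congr 1; abel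
    _ ≤ _ := this
    _ = _ := by ring

lemma NablaBdd.lip {A : E3 → M3} (hA : NablaBdd 1 1 A) (x y : E3) :
    ‖A x - A y‖ ≤ nablaNorm 1 1 A * ‖x - y‖ ∧
    ∀ a b : E3, ‖(A (x - a) - A (y - a)) - (A (x - b) - A (y - b))‖ ≤
      nablaNorm 1 1 A * ‖x - y‖ * ‖a - b‖ := by
  have hC : ContDiff ℝ 2 A := by
    have := hA.1
    norm_num at this
    exact this
  have t0 : ∀ j, 0 ≤ tnorm j A := fun j => by
    apply Real.sSup_nonneg
    rintro r ⟨x, rfl⟩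
    exact norm_nonneg _
  have hN : nablaNorm 1 1 A = tnorm 1 A + tnorm 2 A := by
    simp [nablaNorm, Finset.sum_range_succ]
  refine diff_bounds hC (fun z => ?_) (fun z => ?_) x y
  · have h1 : ‖iteratedFDeriv ℝ 1 A z‖ ≤ tnorm 1 A :=
      le_csSup (hA.2 1 le_rfl (by norm_num)) ⟨z, rfl⟩
    linarith [t0 2]
  · have h1 : ‖iteratedFDeriv ℝ 2 A z‖ ≤ tnorm 2 A :=
      le_csSup (hA.2 2 (by norm_num) (by norm_num)) ⟨z, rfl⟩
    linarith [t0 1]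

lemma nablaNorm_nonneg (A : E3 → M3) : 0 ≤ nablaNorm 1 1 A := by
  refine Finset.sum_nonneg fun j _ => Real.sSup_nonneg ?_
  rintro r ⟨x, rfl⟩
  exact norm_nonneg _

/-- The velocity field of a closed Hölder curve is bounded. -/
lemma velocity_bound {γ b : ℝ} (hγ : 1 / 2 < γ) {A : E3 → M3} (hA : NablaBdd 1 1 A)
    {Z : ℝ → E3} (hZ : MemC γ Z) (hb : hSemi γ Z ≤ b) {V : E3 → E3}
    (hV : IsYoungVelocity A Z V) (x : E3) :
    ‖V x‖ ≤ yConst γ * nablaNorm 1 1 A * b ^ 2 := by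
  have hb0 := (hSemi_nonneg γ Z).trans hb
  have hN := nablaNorm_nonneg A
  have hZb : ∀ s ∈ Icc (0:ℝ) 1, ∀ t ∈ Icc (0:ℝ) 1, ‖Z s - Z t‖ ≤ b * |s - t| ^ γ :=
    fun s hs t ht => (hZ.2.bound hs ht).trans (by gcongr)
  refine (young_bound hγ (a := nablaNorm 1 1 A * b) (by positivity) ?_ hZb hZ.1.2
    (hV.tendsto x)).trans (le_of_eq (by ring))
  intro s hs t ht
  refine ((hA.lip _ _).1).trans ?_
  rw [sub_sub_sub_cancel_left, norm_sub_rev, mul_assoc]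
  gcongr
  exact hZb s hs t ht

/-- The velocity field of a closed Hölder curve is Lipschitz. -/
lemma velocity_lip {γ b : ℝ} (hγ : 1 / 2 < γ) {A : E3 → M3} (hA : NablaBdd 1 1 A)
    {Z : ℝ → E3} (hZ : MemC γ Z) (hb : hSemi γ Z ≤ b) {V : E3 → E3}
    (hV : IsYoungVelocity A Z V) (x y : E3) :
    ‖V x - V y‖ ≤ yConst γ * nablaNorm 1 1 A * b ^ 2 * ‖x - y‖ := by
  have hb0 := (hSemi_nonneg γ Z).trans hb
  have hN := nablaNorm_nonneg A
  have hZb : ∀ s ∈ Icc (0:ℝ) 1, ∀ t ∈ Icc (0:ℝ) 1, ‖Z s - Z t‖ ≤ b * |s - t| ^ γ :=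
    fun s hs t ht => (hZ.2.bound hs ht).trans (by gcongr)
  have hlim : Tendsto (dyadicSum (fun ξ => A (x - Z ξ) - A (y - Z ξ)) Z) atTop
      (𝓝 (V x - V y)) := by
    refine ((hV.tendsto x).sub (hV.tendsto y)).congr fun k => ?_
    simp only [dyadicSum, ← Finset.sum_sub_distrib, sub_apply]
  refine (young_bound hγ (a := nablaNorm 1 1 A * ‖x - y‖ * b) (by positivity) ?_ hZb hZ.1.2
    hlim).trans (le_of_eq (by ring))
  intro s hs t ht
  refine ((hA.lip x y).2 _ _).trans ?_
  rw [mul_assoc _ b]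
  gcongr
  exact hZb s hs t ht

/-! ### Invariance -/

/-- The integrand of `F(Y)` is a pointwise limit of functions continuous in time, hence
measurable, and it is bounded. -/
lemma integrand_intervalIntegrable {γ T b : ℝ} (hγ : 1 / 2 < γ) {A : E3 → M3}
    (hA : NablaBdd 1 1 A) {Y : ℝ → ℝ → E3} (hY : MemXT γ T Y) {v : ℝ → E3 → E3}
    (hv : ∀ s ∈ Icc 0 T, IsYoungVelocity A (Y s) (v s))
    (hb : ∀ s ∈ Icc 0 T, hSemi γ (Y s) ≤ b) {ξ : ℝ} (hξ : ξ ∈ Icc (0:ℝ) 1)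
    {t t' : ℝ} (ht : t ∈ Icc 0 T) (ht' : t' ∈ Icc 0 T) :
    IntervalIntegrable (fun s => v s (Y s ξ)) volume t t' := by
  have hAc : Continuous A := hA.1.continuous
  have hmeas : AEStronglyMeasurable (fun s => v s (Y s ξ)) (volume.restrict (Icc 0 T)) := by
    refine aestronglyMeasurable_of_tendsto_ae atTop
      (f := fun k s => dyadicSum (fun η => A (Y s ξ - Y s η)) (Y s) k) (fun k => ?_) ?_
    · refine ContinuousOn.aestronglyMeasurable ?_ measurableSet_Icc
      unfold dyadicSum
      refine continuousOn_finsetSum _ fun i hi => ?_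
      have hi' : (i : ℝ) + 1 ≤ 2 ^ k := by exact_mod_cast Finset.mem_range.1 hi
      have m2 : (i / 2 ^ k : ℝ) ∈ Icc (0 : ℝ) 1 :=
        ⟨by positivity, by rw [div_le_one (by positivity)]; linarith⟩
      have m3 : ((i + 1) / 2 ^ k : ℝ) ∈ Icc (0 : ℝ) 1 :=
        ⟨by positivity, by rw [div_le_one (by positivity)]; linarith⟩
      exact (hAc.comp_continuousOn ((hY.continuousOn hξ).sub (hY.continuousOn m2))).clm_apply
        ((hY.continuousOn m3).sub (hY.continuousOn m2))
    · filter_upwards [ae_restrict_mem measurableSet_Icc] with s hs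
      exact (hv s hs).tendsto _
  have hint : IntegrableOn (fun s => v s (Y s ξ)) (Icc 0 T) volume := by
    refine Integrable.of_bound hmeas (yConst γ * nablaNorm 1 1 A * b ^ 2) ?_
    filter_upwards [ae_restrict_mem measurableSet_Icc] with s hs
    exact velocity_bound hγ hA (hY.1 s hs) (hb s hs) (hv s hs) _
  exact (hint.mono_set (uIcc_subset_Icc ht ht')).intervalIntegrable

/-- Quantitative invariance: if `‖Y‖_{𝐗_T} ≤ B` and
`‖X‖_γ^* + T K ‖∇A‖_1 B² (1 + B) ≤ B`, where `K` is the constant in Young's estimate, then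
`F(Y) ∈ 𝐗_T` and `‖F(Y)‖_{𝐗_T} ≤ B`. -/
lemma Fmap_invariant {γ T B : ℝ} (hγ : 1 / 2 < γ) (hT : 0 < T) {A : E3 → M3}
    (hA : NablaBdd 1 1 A) {X : ℝ → E3} (hX : MemC γ X) {Y : ℝ → ℝ → E3} {v : ℝ → E3 → E3}
    (hv : ∀ s ∈ Icc 0 T, IsYoungVelocity A (Y s) (v s)) (hY : MemXT γ T Y)
    (hYB : xnorm γ T Y ≤ B)
    (hB : hStar γ X + T * (yConst γ * nablaNorm 1 1 A * B ^ 2 * (1 + B)) ≤ B) :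
    MemXT γ T (Fmap X v Y) ∧ xnorm γ T (Fmap X v Y) ≤ B := by
  set L := yConst γ * nablaNorm 1 1 A * B ^ 2 with hL
  have hL0 : 0 ≤ L := mul_nonneg (mul_nonneg (yConst_nonneg hγ) (nablaNorm_nonneg A)) (sq_nonneg _)
  have hb : ∀ s ∈ Icc 0 T, hSemi γ (Y s) ≤ B := fun s hs => by
    have h1 := hY.hStar_le hs
    have h2 := sNorm_nonneg (Y s)
    unfold hStar at h1
    linarith
  have h0T : (0:ℝ) ∈ Icc 0 T := ⟨le_rfl, hT.le⟩
  have hB0 : 0 ≤ B := (hSemi_nonneg γ (Y 0)).trans (hb 0 h0T)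
  -- `hI` bounds the integral over a time interval, `hD` its increment in the curve parameter;
  -- the integrability `hii` is what allows the difference of integrals in `hD` to be combined.
  have hii : ∀ ξ ∈ Icc (0:ℝ) 1, ∀ t ∈ Icc 0 T, ∀ t' ∈ Icc 0 T,
      IntervalIntegrable (fun s => v s (Y s ξ)) volume t t' := fun ξ hξ t ht t' ht' =>
    integrand_intervalIntegrable hγ hA hY hv hb hξ ht ht'
  have hI : ∀ ξ ∈ Icc (0:ℝ) 1, ∀ t ∈ Icc 0 T, ∀ t' ∈ Icc 0 T,
      ‖∫ s in t..t', v s (Y s ξ)‖ ≤ L * |t' - t| := by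
    intro ξ _ t ht t' ht'
    refine intervalIntegral.norm_integral_le_of_norm_le_const fun s hs => ?_
    have hs' : s ∈ Icc 0 T := uIcc_subset_Icc ht ht' (uIoc_subset_uIcc hs)
    exact velocity_bound hγ hA (hY.1 s hs') (hb s hs') (hv s hs') _
  have hD : ∀ ξ ∈ Icc (0:ℝ) 1, ∀ η ∈ Icc (0:ℝ) 1, ∀ t ∈ Icc 0 T, ∀ t' ∈ Icc 0 T,
      ‖(∫ s in t..t', v s (Y s ξ)) - ∫ s in t..t', v s (Y s η)‖ ≤
        L * B * |t' - t| * |ξ - η| ^ γ := by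
    intro ξ hξ η hη t ht t' ht'
    rw [← intervalIntegral.integral_sub (hii ξ hξ t ht t' ht') (hii η hη t ht t' ht')]
    have : ‖∫ s in t..t', (v s (Y s ξ) - v s (Y s η))‖ ≤ (L * (B * |ξ - η| ^ γ)) * |t' - t| := by
      refine intervalIntegral.norm_integral_le_of_norm_le_const fun s hs => ?_
      have hs' : s ∈ Icc 0 T := uIcc_subset_Icc ht ht' (uIoc_subset_uIcc hs)
      refine (velocity_lip hγ hA (hY.1 s hs') (hb s hs') (hv s hs') _ _).trans ?_
      refine mul_le_mul_of_nonneg_left (((hY.1 s hs').2.bound hξ hη).trans ?_) hL0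
      exact mul_le_mul_of_nonneg_right (hb s hs') (by positivity)
    exact this.trans (le_of_eq (by ring))
  have hFH : ∀ t ∈ Icc 0 T, ∀ ξ ∈ Icc (0:ℝ) 1, ∀ η ∈ Icc (0:ℝ) 1,
      ‖Fmap X v Y t ξ - Fmap X v Y t η‖ ≤ (hSemi γ X + L * B * T) * |ξ - η| ^ γ := by
    intro t ht ξ hξ η hη
    have h1 := hD ξ hξ η hη 0 h0T t ht
    rw [sub_zero, abs_of_nonneg ht.1] at h1
    have h2 : L * B * t * |ξ - η| ^ γ ≤ L * B * T * |ξ - η| ^ γ := by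
      gcongr
      exact ht.2
    unfold Fmap
    rw [add_sub_add_comm, add_mul]
    exact (norm_add_le _ _).trans (add_le_add (hX.2.bound hξ hη) (h1.trans h2))
  have hMem : ∀ t ∈ Icc 0 T, MemC γ (Fmap X v Y t) := by
    intro t ht
    have hH : HolderOn γ (Fmap X v Y t) := ⟨_, hFH t ht⟩
    refine ⟨⟨hH.continuousOn (by linarith), ?_⟩, hH⟩
    unfold Fmap
    rw [hX.1.2]
    congr 1
    refine intervalIntegral.integral_congr fun s hs => ?_
    rw [(hY.1 s (uIcc_subset_Icc h0T ht hs)).1.2]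
  refine ⟨⟨hMem, ?_⟩, ?_⟩
  · -- `t ↦ F(Y)(t)` is Lipschitz with constant `L * (1 + B)`.
    intro t ht ε hε
    refine ⟨ε / (L * (1 + B) + 1), by positivity, fun s hs hst => ?_⟩
    have hsub : ∀ ξ ∈ Icc (0:ℝ) 1, Fmap X v Y s ξ - Fmap X v Y t ξ
        = ∫ r in t..s, v r (Y r ξ) := by
      intro ξ hξ
      unfold Fmap
      rw [add_sub_add_left_eq_sub, intervalIntegral.integral_interval_sub_left
        (hii ξ hξ 0 h0T s hs) (hii ξ hξ 0 h0T t ht)]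
    have h1 : sNorm (fun ξ => Fmap X v Y s ξ - Fmap X v Y t ξ) ≤ L * |s - t| := by
      refine sNorm_le (by positivity) fun ξ hξ => ?_
      rw [hsub ξ hξ]
      exact hI ξ hξ t ht s hs
    have h2 : hSemi γ (fun ξ => Fmap X v Y s ξ - Fmap X v Y t ξ) ≤ L * B * |s - t| := by
      refine hSemi_le (by positivity) fun ξ hξ η hη => ?_
      rw [hsub ξ hξ, hsub η hη]
      exact hD ξ hξ η hη t ht s hs
    rw [le_div_iff₀ (by positivity)] at hst
    unfold hStar
    nlinarith [abs_nonneg (s - t)]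
  · refine Real.sSup_le ?_ hB0
    rintro r ⟨t, ht, rfl⟩
    have h1 : sNorm (Fmap X v Y t) ≤ sNorm X + L * T := by
      refine sNorm_le (add_nonneg (sNorm_nonneg X) (by positivity)) fun ξ hξ => ?_
      have h1 := hI ξ hξ 0 h0T t ht
      rw [sub_zero, abs_of_nonneg ht.1] at h1
      exact (norm_add_le _ _).trans (add_le_add (hX.norm_le hξ)
        (h1.trans (mul_le_mul_of_nonneg_left ht.2 hL0)))
    have h2 : hSemi γ (Fmap X v Y t) ≤ hSemi γ X + L * B * T :=
      hSemi_le (add_nonneg (hSemi_nonneg γ X) (by positivity)) (hFH t ht)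
    unfold hStar at hB ⊢
    nlinarith

/-- The existence time as a function of `N = ‖∇A‖_1` and `x = ‖X‖_γ^*`. It is chosen so that
`B = x + 1` satisfies the condition of `Fmap_invariant`; the `+ 1` avoids division by zero. -/
def tau (γ N x : ℝ) : ℝ := 1 / (yConst γ * N * (x + 1) ^ 2 * (1 + (x + 1)) + 1)

/-- Invariance with the explicit radius `B = ‖X‖_γ^* + 1`. As `B > ‖X‖_γ^*`, the invariant set
contains the constant path `Y(t) = X`, so the assertion is not vacuous. -/
theorem invariance_with_radius {γ : ℝ} (hγ : 1 / 2 < γ) {A : E3 → M3} (hA : NablaBdd 1 1 A)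
    {X : ℝ → E3} (hX : MemC γ X) :
    0 < tau γ (nablaNorm 1 1 A) (hStar γ X) ∧
    ∀ T : ℝ, 0 < T → T < tau γ (nablaNorm 1 1 A) (hStar γ X) →
      ∀ (Y : ℝ → ℝ → E3) (v : ℝ → E3 → E3),
        (∀ s ∈ Icc 0 T, IsYoungVelocity A (Y s) (v s)) →
        MemXT γ T Y → xnorm γ T Y ≤ hStar γ X + 1 →
        MemXT γ T (Fmap X v Y) ∧ xnorm γ T (Fmap X v Y) ≤ hStar γ X + 1 := by
  have hK := yConst_nonneg hγ
  have hN := nablaNorm_nonneg A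
  have hx := hStar_nonneg γ X
  refine ⟨by unfold tau; positivity, fun T hT hTlt Y v hv hY hYB => ?_⟩
  refine Fmap_invariant hγ hT hA hX hv hY hYB ?_
  unfold tau at hTlt
  rw [lt_div_iff₀ (by positivity)] at hTlt
  linarith

/-- local invariance, Young case. For `1/2 < γ ≤ 1` there is a function `τ`
(so that `T₀ = τ(‖∇A‖_1, ‖X‖_γ^*)` depends only on `‖∇A‖_1`, `‖X‖_γ^*` and `γ`) such that for
every `A` with `‖∇A‖_1 < ∞` and every `X ∈ 𝒞^γ` one has `T₀ > 0` and, for every `0 < T < T₀`,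
there is a constant `B_T` such that the set
`Q_T = {Y ∈ C([0,T],𝒞^γ) : Y(0) = X, ‖Y‖_{𝐗_T} ≤ B_T}` is invariant under
`F(Y)(t)_ξ = X_ξ + ∫_0^t V^{Y(s)}(Y(s)_ξ) ds`. -/
theorem statement_5 (γ : ℝ) (hγ : 1 / 2 < γ) (hγ1 : γ ≤ 1) :
    ∃ τ : ℝ → ℝ → ℝ,
      ∀ A : E3 → M3, NablaBdd 1 1 A →
      ∀ X : ℝ → E3, MemC γ X →
        0 < τ (nablaNorm 1 1 A) (hStar γ X) ∧
        ∀ T : ℝ, 0 < T → T < τ (nablaNorm 1 1 A) (hStar γ X) →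
          ∃ B : ℝ,
            ∀ (Y : ℝ → ℝ → E3) (v : ℝ → E3 → E3),
              (∀ s ∈ Icc 0 T, IsYoungVelocity A (Y s) (v s)) →
              MemXT γ T Y →
              (∀ ξ ∈ Icc (0:ℝ) 1, Y 0 ξ = X ξ) →
              xnorm γ T Y ≤ B →
              MemXT γ T (Fmap X v Y) ∧
                (∀ ξ ∈ Icc (0:ℝ) 1, Fmap X v Y 0 ξ = X ξ) ∧
                xnorm γ T (Fmap X v Y) ≤ B := by
  refine ⟨tau γ, fun A hA X hX => ?_⟩
  obtain ⟨hpos, hinv⟩ := invariance_with_radius hγ hA hX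
  refine ⟨hpos, fun T hT hTlt => ⟨hStar γ X + 1, fun Y v hv hY _ hYB => ?_⟩⟩
  obtain ⟨h1, h2⟩ := hinv T hT hTlt Y v hv hY hYB
  exact ⟨h1, fun ξ _ => by simp [Fmap], h2⟩

end
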